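/- arXiv:2004.03847 — 3 statements merged into one kernel-verified Lean document; each statement's English description precedes it below -/
import Mathlib

section
/- Let R be a valuation ring with fraction field K, and let A be a flat, finite type commutative R-algebra. Let f ∈ A be a relatively regular element, i.e. f is a nonzerodivisor in A and the quotient ring A/(f) is flat as an R-module. Let a ∈ A be a nonzerodivisor whose image in A ⊗_R K is a unit. Then the image of f in A/(a) is a nonzerodivisor. -/
/-!
Since `a` becomes invertible over the fraction field, clearing denominators gives `b : A` and a
nonzero `r : R` with `a * b = r`. If `f * g = a * h`, multiplying by `b` shows `r • h ∈ (f)`. As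
`A ⧸ (f)` is flat over a domain it is torsion-free, so `h = f * k`. Cancelling the nonzerodivisor
`f` in `f * g = a * f * k` gives `g = a * k ∈ (a)`.
-/

/-- Clearing denominators: an element invertible after base change to the fraction field divides
a nonzero scalar. -/
lemma exists_mul_eq_algebraMap_of_isUnit_includeRight
    {R A : Type*} [CommRing R] [IsDomain R] [CommRing A] [Algebra R A] {a : A}
    (ha : IsUnit ((Algebra.TensorProduct.includeRight :
        A →ₐ[R] TensorProduct R (FractionRing R) A) a)) :
    ∃ b : A, ∃ r ∈ nonZeroDivisors R, a * b = algebraMap R A r := by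
  have : IsLocalizedModule (nonZeroDivisors R) (TensorProduct.mk R (FractionRing R) A 1) :=
    (isLocalizedModule_iff_isBaseChange _ (FractionRing R) _).2
      (TensorProduct.isBaseChange R A (FractionRing R))
  obtain ⟨u, hu⟩ := ha.exists_right_inv
  obtain ⟨⟨b, s⟩, hs⟩ := IsLocalizedModule.surj (nonZeroDivisors R)
    (TensorProduct.mk R (FractionRing R) A 1) u
  have key : TensorProduct.mk R (FractionRing R) A 1 (a * b)
      = TensorProduct.mk R (FractionRing R) A 1 (algebraMap R A s) := by
    calc TensorProduct.mk R (FractionRing R) A 1 (a * b)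
        = (Algebra.TensorProduct.includeRight :
            A →ₐ[R] TensorProduct R (FractionRing R) A) a *
            TensorProduct.mk R (FractionRing R) A 1 b := by simp
      _ = (s : R) • (1 : TensorProduct R (FractionRing R) A) := by
          rw [← hs, ← hu, Submonoid.smul_def, mul_smul_comm]
      _ = _ := by
          rw [Algebra.algebraMap_eq_smul_one, map_smul]
          rfl
  obtain ⟨c, hc⟩ := IsLocalizedModule.exists_of_eq (S := nonZeroDivisors R) key
  refine ⟨(c : R) • b, c * s, mul_mem c.2 s.2, ?_⟩
  rw [mul_smul_comm, map_mul, ← Algebra.smul_def]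
  exact hc

/-- Let `R` be a valuation ring with fraction field `K`, and `A` a flat, finite type
commutative `R`-algebra. If `f ∈ A` is relatively regular (a nonzerodivisor with `A/(f)`
flat over `R`) and `a ∈ A` is a nonzerodivisor whose image in `A ⊗_R K` is a unit, then
the image of `f` in `A/(a)` is a nonzerodivisor. -/
theorem relatively_regular_restricts_to_regular
    (R : Type*) [CommRing R] [IsDomain R] [ValuationRing R]
    (A : Type*) [CommRing A] [Algebra R A]
    [Module.Flat R A] [Algebra.FiniteType R A]
    (f a : A)
    (hf : f ∈ nonZeroDivisors A)
    (hfflat : Module.Flat R (A ⧸ Ideal.span {f}))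
    (ha : a ∈ nonZeroDivisors A)
    (haunit : IsUnit ((Algebra.TensorProduct.includeRight :
        A →ₐ[R] TensorProduct R (FractionRing R) A) a)) :
    Ideal.Quotient.mk (Ideal.span {a}) f ∈ nonZeroDivisors (A ⧸ Ideal.span {a}) := by
  obtain ⟨b, r, hr, hab⟩ := exists_mul_eq_algebraMap_of_isUnit_includeRight haunit
  rw [mem_nonZeroDivisors_iff_right]
  intro x hx
  obtain ⟨g, rfl⟩ := Ideal.Quotient.mk_surjective x
  rw [← map_mul, Ideal.Quotient.eq_zero_iff_dvd] at hx
  obtain ⟨h, hh⟩ := hx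
  have hrh : r • Ideal.Quotient.mk (Ideal.span {f}) h = 0 := by
    rw [← Ideal.Quotient.mk_eq_mk, ← Submodule.Quotient.mk_smul, Ideal.Quotient.mk_eq_mk,
      Ideal.Quotient.eq_zero_iff_dvd, Algebra.smul_def, ← hab]
    exact ⟨g * b, by linear_combination -b * hh⟩
  have hreg : IsSMulRegular (A ⧸ Ideal.span {f}) r :=
    Module.Flat.isSMulRegular_of_nonZeroDivisors hr
  have hh0 : Ideal.Quotient.mk (Ideal.span {f}) h = 0 := hreg (by simpa using hrh)
  rw [Ideal.Quotient.eq_zero_iff_dvd] at hh0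
  obtain ⟨k, rfl⟩ := hh0
  rw [Ideal.Quotient.eq_zero_iff_dvd]
  refine ⟨k, (mul_cancel_right_mem_nonZeroDivisors hf).1 ?_⟩
  linear_combination hh
end

section
/- Let α be a set and B the set of all functions α → ℝ. Let P : B → B be monotone (if φ ≤ ψ pointwise then Pφ ≤ Pψ pointwise), decreasing (Pφ ≤ φ pointwise for all φ ∈ B) and idempotent (P(Pφ) = Pφ for all φ ∈ B). Let E : B → ℝ be a function, and for each φ ∈ B let μ_φ : B → ℝ be a function. Assume the differentiability property: for every ψ ∈ B with Pψ = ψ and every f ∈ B, the function t ↦ E(P(ψ + t f)) of the real variable t is differentiable at t = 0 with derivative μ_ψ(f). Then the orthogonality property holds: μ_{Pφ}(φ − Pφ) = 0 for every φ ∈ B. -/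
/-!
Put `ψ = P φ` and `f = φ - P φ ≥ 0`. For `0 ≤ t ≤ 1` the function `ψ + t f` lies between `P φ`
and `φ`, so monotonicity and idempotence of `P` force `P (ψ + t f) = P φ`. Hence
`t ↦ E (P (ψ + t f))` is constant on `[0, 1]`; its derivative at `0`, which exists by
hypothesis and equals `μ ψ f`, is determined by its values on `[0, 1]` and so vanishes.
-/

/-- Differentiability of `E ∘ P` at fixed points of `P` implies the orthogonality
property `μ_{Pφ}(φ − Pφ) = 0`. -/
theorem differentiability_implies_orthogonality
    {α : Type*} (P : (α → ℝ) → (α → ℝ))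
    (hmono : ∀ φ ψ : α → ℝ, (∀ x, φ x ≤ ψ x) → ∀ x, P φ x ≤ P ψ x)
    (hdec : ∀ (φ : α → ℝ) (x : α), P φ x ≤ φ x)
    (hidem : ∀ φ : α → ℝ, P (P φ) = P φ)
    (E : (α → ℝ) → ℝ) (μ : (α → ℝ) → (α → ℝ) → ℝ)
    (hdiff : ∀ ψ : α → ℝ, P ψ = ψ → ∀ f : α → ℝ,
      HasDerivAt (fun t : ℝ => E (P (fun x => ψ x + t * f x))) (μ ψ f) 0) :
    ∀ φ : α → ℝ, μ (P φ) (fun x => φ x - P φ x) = 0 := by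
  intro φ
  have hconst : ∀ t ∈ Set.Icc (0 : ℝ) 1,
      E (P (fun x => P φ x + t * (φ x - P φ x))) = E (P φ) := by
    rintro t ⟨ht0, ht1⟩
    congr 1
    funext x
    apply le_antisymm
    · refine hmono _ φ (fun y => ?_) x
      nlinarith [hdec φ y]
    · have h := hmono (P φ) (fun y => P φ y + t * (φ y - P φ y))
        (fun y => by nlinarith [hdec φ y]) x
      rwa [hidem φ] at h
  have hd := (hdiff (P φ) (hidem φ) (fun x => φ x - P φ x)).hasDerivWithinAt
    (s := Set.Icc (0 : ℝ) 1)
  have h0 : (0 : ℝ) ∈ Set.Icc (0 : ℝ) 1 := ⟨le_rfl, zero_le_one⟩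
  have hc : HasDerivWithinAt (fun t : ℝ => E (P (fun x => P φ x + t * (φ x - P φ x)))) 0
      (Set.Icc (0 : ℝ) 1) 0 :=
    (hasDerivWithinAt_const (0 : ℝ) (Set.Icc (0 : ℝ) 1) (E (P φ))).congr hconst (hconst 0 h0)
  exact (uniqueDiffOn_Icc zero_lt_one 0 h0).eq_deriv _ hd hc
end

section
/- Let α be a set and B the set of all functions α → ℝ. Let P : B → B be monotone (if φ ≤ ψ pointwise then Pφ ≤ Pψ pointwise) and decreasing (Pφ ≤ φ pointwise for all φ ∈ B). Let E : B → ℝ be a function, and for each φ ∈ B let μ_φ : B → ℝ be ℝ-linear and positive (f ≥ 0 pointwise implies μ_φ(f) ≥ 0). Assume: (concavity sandwich) for all φ, φ' ∈ B, μ_{Pφ'}(Pφ' − Pφ) ≤ E(Pφ') − E(Pφ) ≤ μ_{Pφ}(Pφ' − Pφ); (orthogonality) μ_{Pφ}(φ − Pφ) = 0 for all φ ∈ B; and (continuity) for all φ, f ∈ B, μ_{P(φ + tf)}(f) → μ_{Pφ}(f) as t → 0. Then for all φ, f ∈ B, the function t ↦ E(P(φ + t f)) is differentiable at t = 0 with derivative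 μ_{Pφ}(f). -/
/-!
Orthogonality and `P ψ ≤ ψ` turn the upper half of the sandwich into
`E (P ψ) - E (P φ) ≤ μ (P φ) (ψ - φ)`. Using this for the pairs `(φ, φ + t f)` and
`(φ + t f, φ)` traps the increment of `E ∘ P` between `t μ_{P(φ + t f)}(f)` and `t μ_{Pφ}(f)`,
for `t` of either sign, and continuity makes the gap between these bounds `o(t)`.
-/

/-- The measure at `P φ` is a supergradient of `E ∘ P` at `φ`: by orthogonality `P φ` may be
replaced by `φ` under `μ (P φ)`, while `P ψ ≤ ψ` and positivity replace `P ψ` by `ψ`. -/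
theorem energy_sub_le_of_orthogonality
    {α : Type*} (P : (α → ℝ) → (α → ℝ))
    (hdec : ∀ (φ : α → ℝ) (x : α), P φ x ≤ φ x)
    (E : (α → ℝ) → ℝ) (μ : (α → ℝ) → ((α → ℝ) →ₗ[ℝ] ℝ))
    (hpos : ∀ (φ f : α → ℝ), (∀ x, 0 ≤ f x) → 0 ≤ μ φ f)
    (hupper : ∀ φ φ' : α → ℝ, E (P φ') - E (P φ) ≤ μ (P φ) (P φ' - P φ))
    (horth : ∀ φ : α → ℝ, μ (P φ) (φ - P φ) = 0) (φ ψ : α → ℝ) :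
    E (P ψ) - E (P φ) ≤ μ (P φ) (ψ - φ) := by
  have h₁ := hupper φ ψ
  have h₂ := horth φ
  have h₃ := hpos (P φ) (ψ - P ψ) fun x => sub_nonneg.2 (hdec ψ x)
  simp only [map_sub] at h₁ h₂ h₃ ⊢
  linarith

/-- Orthogonality, together with the concavity sandwich and continuity of the
Monge–Ampère-type functionals, implies differentiability of `E ∘ P`. -/
theorem orthogonality_implies_differentiability
    {α : Type*} (P : (α → ℝ) → (α → ℝ))
    (hmono : ∀ φ ψ : α → ℝ, (∀ x, φ x ≤ ψ x) → ∀ x, P φ x ≤ P ψ x)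
    (hdec : ∀ (φ : α → ℝ) (x : α), P φ x ≤ φ x)
    (E : (α → ℝ) → ℝ) (μ : (α → ℝ) → ((α → ℝ) →ₗ[ℝ] ℝ))
    (hpos : ∀ (φ f : α → ℝ), (∀ x, 0 ≤ f x) → 0 ≤ μ φ f)
    (hsandwich : ∀ φ φ' : α → ℝ,
      μ (P φ') (P φ' - P φ) ≤ E (P φ') - E (P φ) ∧
      E (P φ') - E (P φ) ≤ μ (P φ) (P φ' - P φ))
    (horth : ∀ φ : α → ℝ, μ (P φ) (φ - P φ) = 0)
    (hcont : ∀ φ f : α → ℝ,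
      Filter.Tendsto (fun t : ℝ => μ (P (φ + t • f)) f) (nhds 0) (nhds (μ (P φ) f))) :
    ∀ φ f : α → ℝ,
      HasDerivAt (fun t : ℝ => E (P (φ + t • f))) (μ (P φ) f) 0 := by
  intro φ f
  have key := energy_sub_le_of_orthogonality P hdec E μ hpos
    (fun φ φ' => (hsandwich φ φ').2) horth
  rw [hasDerivAt_iff_isLittleO]
  have hgap : Asymptotics.IsLittleO (nhds 0)
      (fun t : ℝ => (μ (P (φ + t • f)) f - μ (P φ) f) * t) fun t : ℝ => t := by
    have h0 : Asymptotics.IsLittleO (nhds 0)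
        (fun t : ℝ => μ (P (φ + t • f)) f - μ (P φ) f) fun _ : ℝ => (1 : ℝ) := by
      rw [Asymptotics.isLittleO_one_iff]
      simpa using (hcont φ f).sub_const (μ (P φ) f)
    simpa using h0.mul_isBigO (Asymptotics.isBigO_refl (fun t : ℝ => t) (nhds 0))
  simp only [sub_zero, zero_smul, add_zero, smul_eq_mul]
  refine Asymptotics.IsBigO.trans_isLittleO (Asymptotics.IsBigO.of_bound 1 ?_) hgap
  refine Filter.Eventually.of_forall fun t => ?_
  have hup := key φ (φ + t • f)
  have hlow := key (φ + t • f) φ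
  rw [add_sub_cancel_left, map_smul, smul_eq_mul] at hup
  rw [sub_add_cancel_left, map_neg, map_smul, smul_eq_mul] at hlow
  -- The error term lies between `(μ_{P(φ + t f)}(f) - μ_{Pφ}(f)) t` and `0`.
  rw [one_mul, Real.norm_eq_abs, Real.norm_eq_abs, abs_of_nonpos (by linarith)]
  refine le_trans ?_ (neg_le_abs _)
  linarith
end
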